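/- There exist constants C > 0 and δ > 0 such that for all x, y ∈ ℝ³ with 0 < |x − y| < δ and every j ∈ {1,2,3}, |∂I₀/∂y_j(x,y) − ((x_j − y_j)/(2(4π)^{3/2}|x−y|³)) ∫_{b|x−y|²}^{∞} u^{1/2} e^{−u/4} du| ≤ C. -/

import Mathlib

/-!
Since `u coth u` and `sinh u / u` are `1 + O(u²)` as `u → 0`, replacing `coth u` and `sinh u` by
`1 / u` and `u` turns `kerInt` into the isotropic Gaussian integrand `u^{-3/2} e^{-b|x-y|²/(4u)}`.
For that model the `y_j`-derivative of the integral is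
`(b/2)(x_j - y_j) ∫₀¹ u^{-5/2} e^{-b|x-y|²/(4u)} du`, and the substitution `v = b|x-y|²/u`
(`integral_tail_eq`) shows that, with the prefactor of `I0`, this is exactly the subtracted term.

Differentiating under the integral sign (`hasFDerivAt_integral_kerInt`) writes the true
derivative as `(b/2)(x_j - y_j) ∫₀¹ wt j u * kerInt b x y u du` with `wt j u` equal to `1 / u`
or `coth u`. The key estimate `wt_mul_kerInt_sub_model` bounds the difference of the two integrands
by `2 u^{-1/2}`, uniformly in `x` and `y`; this is integrable on `(0, 1)`, so the error is
`O(|x - y|)` and any `δ` would do; `δ = 1` is used.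
-/

open MeasureTheory Set

/-- `|x_⊥ - y_⊥|²` for `x, y ∈ ℝ³`. -/
noncomputable def perpSq (x y : EuclideanSpace ℝ (Fin 3)) : ℝ :=
  (x 0 - y 0) ^ 2 + (x 1 - y 1) ^ 2

/-- The integrand `exp(-(b/4)[(x₃-y₃)²/u + coth(u)|x_⊥-y_⊥|²]) / (u^{1/2} sinh u)`. -/
noncomputable def kerInt (b : ℝ) (x y : EuclideanSpace ℝ (Fin 3)) (u : ℝ) : ℝ :=
  Real.exp (-(b / 4) * ((x 2 - y 2) ^ 2 / u + Real.cosh u / Real.sinh u * perpSq x y)) /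
    (Real.sqrt u * Real.sinh u)

/-- `I₀(x,y) = (b^{1/2}/(4π)^{3/2}) ∫₀¹ kerInt b x y u du`. -/
noncomputable def I0 (b : ℝ) (x y : EuclideanSpace ℝ (Fin 3)) : ℝ :=
  Real.sqrt b / (4 * Real.pi) ^ ((3 : ℝ) / 2) * ∫ u in Ioo (0 : ℝ) 1, kerInt b x y u

/-- `I_∞(x,y) = (b^{1/2}/(4π)^{3/2}) ∫₁^∞ kerInt b x y u du`. -/
noncomputable def IInf (b : ℝ) (x y : EuclideanSpace ℝ (Fin 3)) : ℝ :=
  Real.sqrt b / (4 * Real.pi) ^ ((3 : ℝ) / 2) * ∫ u in Ici (1 : ℝ), kerInt b x y u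

/-! ### Hyperbolic functions near zero -/

lemma sinh_le_mul_cosh {u : ℝ} (hu : 0 < u) : Real.sinh u ≤ u * Real.cosh u := by
  obtain ⟨c, hc, h⟩ := exists_deriv_eq_slope Real.sinh hu
    Real.continuous_sinh.continuousOn Real.differentiable_sinh.differentiableOn
  have h1 : Real.cosh c ≤ Real.cosh u := by
    rw [Real.cosh_le_cosh, abs_of_pos hc.1, abs_of_pos hu]
    exact hc.2.le
  rw [Real.deriv_sinh, Real.sinh_zero, sub_zero, sub_zero, eq_div_iff hu.ne'] at h
  nlinarith

lemma cosh_le_one_add_sq {u : ℝ} (hu : 0 < u) (hu1 : u < 1) : Real.cosh u ≤ 1 + u ^ 2 := by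
  have h1 := Real.cosh_le_exp_half_sq u
  have h2 : u ^ 2 < 1 := by nlinarith
  have h3 : |u ^ 2 / 2| ≤ 1 := by rw [abs_of_nonneg (by positivity)]; linarith
  have h4 := (abs_le.1 (Real.abs_exp_sub_one_sub_id_le h3)).2
  nlinarith [sq_nonneg u]

lemma coth_bounds {u : ℝ} (hu : 0 < u) (hu1 : u < 1) :
    1 / u ≤ Real.cosh u / Real.sinh u ∧ Real.cosh u / Real.sinh u ≤ 1 / u + u := by
  have hs : 0 < Real.sinh u := Real.sinh_pos_iff.2 hu
  have h1 := sinh_le_mul_cosh hu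
  have h2 := cosh_le_one_add_sq hu hu1
  have h3 := Real.self_le_sinh_iff.2 hu.le
  constructor
  · rw [div_le_div_iff₀ hu hs]; linarith
  · have h4 : 1 / u + u = (1 + u ^ 2) / u := by field_simp
    rw [h4, div_le_div_iff₀ hs hu]
    exact mul_le_mul h2 h3 hu.le (by positivity)

/-- The factor produced by `∂/∂y_j` in the exponent of `kerInt`: `1 / u` in the axial direction,
`coth u` in the two transverse ones. -/
noncomputable def wt (j : Fin 3) (u : ℝ) : ℝ :=
  if j = 2 then 1 / u else Real.cosh u / Real.sinh u

lemma wt_bounds (j : Fin 3) {u : ℝ} (hu : 0 < u) (hu1 : u < 1) :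
    1 / u ≤ wt j u ∧ wt j u ≤ 1 / u + u := by
  unfold wt
  split_ifs
  · exact ⟨le_rfl, by linarith⟩
  · exact coth_bounds hu hu1

/-! ### Comparison of the kernel with its Gaussian model -/

/-- `u^{-5/2} e^{-A/(4u)}`, the small-`u` model of `wt j u * kerInt b x y u` when
`A = b|x - y|²`. -/
noncomputable def model (A u : ℝ) : ℝ := Real.exp (-(A / (4 * u))) / (Real.sqrt u * u ^ 2)

/-- From `e^{-t} ≤ 6 / t³` with `t = A / (4u)`; the constant is `6 * 4³`. -/
lemma model_le {A u : ℝ} (hA : 0 < A) (hu : 0 < u) (hu1 : u < 1) :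
    model A u ≤ 384 / A ^ 3 := by
  have h1 := Real.pow_div_factorial_le_exp (x := A / (4 * u)) (by positivity) 3
  have hs : 0 < Real.sqrt u := Real.sqrt_pos.2 hu
  have hs2 : Real.sqrt u * Real.sqrt u = u := Real.mul_self_sqrt hu.le
  have hs1 : Real.sqrt u ≤ 1 := Real.sqrt_le_one.2 hu1.le
  have h2 : A ^ 3 / (384 * u ^ 3) ≤ Real.exp (A / (4 * u)) := by
    refine le_of_eq_of_le ?_ h1
    norm_num [Nat.factorial]
    field_simp
    norm_num
  have h3 : Real.exp (-(A / (4 * u))) ≤ 384 * u ^ 3 / A ^ 3 := by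
    rw [Real.exp_neg, inv_le_comm₀ (Real.exp_pos _) (by positivity), inv_div]
    exact h2
  unfold model
  rw [div_le_iff₀ (by positivity)]
  refine h3.trans ?_
  rw [div_mul_eq_mul_div]
  gcongr
  have : u ≤ Real.sqrt u := by nlinarith
  nlinarith [sq_nonneg u]

lemma model_nonneg {A u : ℝ} : 0 ≤ model A u := by unfold model; positivity

lemma dist_sq_eq (x y : EuclideanSpace ℝ (Fin 3)) :
    dist x y ^ 2 = (x 2 - y 2) ^ 2 + perpSq x y := by
  rw [EuclideanSpace.dist_eq, Real.sq_sqrt (by positivity), Fin.sum_univ_three]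
  simp only [Real.dist_eq, sq_abs, perpSq]
  ring

lemma perpSq_nonneg (x y : EuclideanSpace ℝ (Fin 3)) : 0 ≤ perpSq x y := by
  unfold perpSq; positivity

/-- Monotonicity in `coth u ≥ 1 / u` and `sinh u ≥ u`: `kerInt` is at most its Gaussian model. -/
lemma kerInt_le {b : ℝ} (hb : 0 < b) (x y : EuclideanSpace ℝ (Fin 3)) {u : ℝ}
    (hu : 0 < u) (hu1 : u < 1) :
    kerInt b x y u ≤ u * model (b * dist x y ^ 2) u := by
  have hs : 0 < Real.sqrt u := Real.sqrt_pos.2 hu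
  have hq := perpSq_nonneg x y
  have h3 := Real.self_le_sinh_iff.2 hu.le
  have hc := (coth_bounds hu hu1).1
  have e : u * model (b * dist x y ^ 2) u
      = Real.exp (-(b * dist x y ^ 2 / (4 * u))) / (Real.sqrt u * u) := by
    unfold model; field_simp
  rw [e]
  unfold kerInt
  refine div_le_div₀ (Real.exp_pos _).le (Real.exp_le_exp.2 ?_) (by positivity) (by gcongr)
  rw [dist_sq_eq]
  have e2 : -(b * ((x 2 - y 2) ^ 2 + perpSq x y) / (4 * u))
      = -(b / 4) * ((x 2 - y 2) ^ 2 / u + 1 / u * perpSq x y) := by field_simp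
  rw [e2]
  have : 1 / u * perpSq x y ≤ Real.cosh u / Real.sinh u * perpSq x y := by gcongr
  nlinarith

lemma kerInt_nonneg {b : ℝ} (x y : EuclideanSpace ℝ (Fin 3)) {u : ℝ}
    (hu : 0 < u) : 0 ≤ kerInt b x y u := by
  have := Real.sinh_pos_iff.2 hu
  unfold kerInt; positivity

/-- The corrections `coth u - 1 / u = O(u)` and `1 / sinh u - 1 / u = O(u)` gain a factor `u²`, and
the exponential absorbs the remaining `b|x_⊥ - y_⊥|² / u`, so the error is `O(u^{-1/2})` uniformly
in `x` and `y`. -/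
lemma wt_mul_kerInt_sub_model {b : ℝ} (hb : 0 < b) (x y : EuclideanSpace ℝ (Fin 3)) (j : Fin 3)
    {u : ℝ} (hu : 0 < u) (hu1 : u < 1) :
    |wt j u * kerInt b x y u - model (b * dist x y ^ 2) u| ≤ 2 / Real.sqrt u := by
  have hs : 0 < Real.sqrt u := Real.sqrt_pos.2 hu
  have hq := perpSq_nonneg x y
  have hS := Real.self_le_sinh_iff.2 hu.le
  have hSp : 0 < Real.sinh u := Real.sinh_pos_iff.2 hu
  have hS2 : Real.sinh u ≤ u * (1 + u ^ 2) := (sinh_le_mul_cosh hu).trans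
    (by gcongr; exact cosh_le_one_add_sq hu hu1)
  have hc := coth_bounds hu hu1
  have hw := wt_bounds j hu hu1
  have hK0 := kerInt_nonneg (b := b) x y hu
  have hK := kerInt_le hb x y hu hu1
  set A := b * dist x y ^ 2 with hA
  have hA0 : 0 ≤ A := by positivity
  set E := Real.exp (-(A / (4 * u))) with hE
  have hE0 : 0 < E := Real.exp_pos _
  have hM : model A u = E / (Real.sqrt u * u ^ 2) := rfl
  have hE1 : E ≤ 1 := Real.exp_le_one_iff.2 (by rw [neg_nonpos]; positivity)
  have hEA : E * (A / (4 * u)) ≤ 1 := by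
    have h1 := Real.add_one_le_exp (A / (4 * u))
    have h2 : E * Real.exp (A / (4 * u)) = 1 := by rw [hE, ← Real.exp_add]; simp
    nlinarith
  have hEu : E / Real.sqrt u ≤ 1 / Real.sqrt u := by gcongr
  set q := perpSq x y with hqdef
  have hqA : b * q ≤ A := by
    rw [hA, dist_sq_eq]; nlinarith [sq_nonneg (x 2 - y 2)]
  rw [abs_le]
  constructor
  · -- Lower bound: `exp(-t) ≥ 1 - t` with `t = (b/4) q u ≥ (b/4) q (coth u - 1/u)`.
    have hKlow : E * (1 - b / 4 * q * u) / (Real.sqrt u * Real.sinh u) ≤ kerInt b x y u := by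
      unfold kerInt
      gcongr
      have h1 := Real.add_one_le_exp (-(b / 4 * q * u))
      calc E * (1 - b / 4 * q * u) ≤ E * Real.exp (-(b / 4 * q * u)) := by
            gcongr; linarith
        _ = Real.exp (-(A / (4 * u)) + -(b / 4 * q * u)) := by rw [Real.exp_add]
        _ ≤ _ := by
            apply Real.exp_le_exp.2
            have e2 : -(A / (4 * u)) + -(b / 4 * q * u)
                = -(b / 4) * ((x 2 - y 2) ^ 2 / u + (1 / u + u) * q) := by
              rw [hA, dist_sq_eq, ← hqdef]; field_simp; ring
            rw [e2]
            have : Real.cosh u / Real.sinh u * q ≤ (1 / u + u) * q := by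
              gcongr; exact hc.2
            nlinarith
    have h1 : 1 / u * kerInt b x y u ≤ wt j u * kerInt b x y u := by gcongr; exact hw.1
    have hSinv : (1 - u ^ 2) / u ≤ 1 / Real.sinh u := by
      rw [div_le_div_iff₀ hu hSp]
      have : 0 ≤ 1 - u ^ 2 := by nlinarith
      nlinarith [mul_le_mul_of_nonneg_left hS2 this, pow_pos hu 5]
    have hSinv2 : 1 / Real.sinh u ≤ 1 / u := by gcongr
    set t := b / 4 * q * u with ht
    have ht0 : 0 ≤ t := by positivity
    have h2 : E / (Real.sqrt u * u) * ((1 - u ^ 2) / u - t / u)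
        ≤ 1 / u * (E * (1 - t) / (Real.sqrt u * Real.sinh u)) := by
      have e3 : 1 / u * (E * (1 - t) / (Real.sqrt u * Real.sinh u))
          = E / (Real.sqrt u * u) * (1 / Real.sinh u - t * (1 / Real.sinh u)) := by
        field_simp
      rw [e3]
      gcongr
      rw [div_eq_mul_one_div t u]
      gcongr
    have h3 : E / (Real.sqrt u * u) * ((1 - u ^ 2) / u - t / u)
        = model A u - E / Real.sqrt u - E * (b * q / (4 * u)) / Real.sqrt u := by
      rw [hM, ht]; field_simp
    have h4 : E * (b * q / (4 * u)) / Real.sqrt u ≤ 1 / Real.sqrt u := by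
      gcongr
      refine le_trans ?_ hEA
      gcongr
    have h5 : 1 / u * (E * (1 - t) / (Real.sqrt u * Real.sinh u)) ≤ 1 / u * kerInt b x y u := by
      gcongr
    have h6 : 2 / Real.sqrt u = 1 / Real.sqrt u + 1 / Real.sqrt u := by ring
    linarith
  · have h1 : wt j u * kerInt b x y u ≤ (1 / u + u) * (u * model A u) := by
      gcongr
      exact hw.2
    have h2 : (1 / u + u) * (u * model A u) = model A u + E / Real.sqrt u := by
      rw [hM]; field_simp
    have h6 : 2 / Real.sqrt u = 1 / Real.sqrt u + 1 / Real.sqrt u := by ring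
    have : 0 < 1 / Real.sqrt u := by positivity
    linarith

lemma wt_mul_kerInt_le {b : ℝ} (hb : 0 < b) (x y : EuclideanSpace ℝ (Fin 3)) (j : Fin 3)
    {u : ℝ} (hu : 0 < u) (hu1 : u < 1) :
    wt j u * kerInt b x y u ≤ 2 * model (b * dist x y ^ 2) u := by
  have hw := wt_bounds j hu hu1
  have hM := model_nonneg (A := b * dist x y ^ 2) (u := u)
  calc wt j u * kerInt b x y u ≤ (1 / u + u) * (u * model (b * dist x y ^ 2) u) := by
        have := kerInt_nonneg (b := b) x y hu
        gcongr
        · exact hw.2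
        · exact kerInt_le hb x y hu hu1
    _ = (1 + u ^ 2) * model (b * dist x y ^ 2) u := by field_simp
    _ ≤ _ := by gcongr; nlinarith

/-! ### Derivative of the kernel -/

/-- The partial derivative `∂/∂y_j` of `kerInt b x y u`. -/
noncomputable def partialKer (b : ℝ) (x y : EuclideanSpace ℝ (Fin 3)) (j : Fin 3) (u : ℝ) : ℝ :=
  b / 2 * (x j - y j) * (wt j u * kerInt b x y u)

/-- The Fréchet derivative of `y ↦ kerInt b x y u`, assembled from its partial derivatives. -/
noncomputable def fderivKer (b : ℝ) (x y : EuclideanSpace ℝ (Fin 3)) (u : ℝ) :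
    EuclideanSpace ℝ (Fin 3) →L[ℝ] ℝ :=
  ∑ j : Fin 3, partialKer b x y j u • (EuclideanSpace.proj j : EuclideanSpace ℝ (Fin 3) →L[ℝ] ℝ)

lemma hasFDerivAt_kerInt (b : ℝ) (x y : EuclideanSpace ℝ (Fin 3)) (u : ℝ) :
    HasFDerivAt (fun y' => kerInt b x y' u) (fderivKer b x y u) y := by
  have hp : ∀ j : Fin 3, HasFDerivAt (fun y' : EuclideanSpace ℝ (Fin 3) => (x j - y' j) ^ 2)
      ((-(2 * (x j - y j))) • (EuclideanSpace.proj j : EuclideanSpace ℝ (Fin 3) →L[ℝ] ℝ)) y := by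
    intro j
    have h := ((EuclideanSpace.proj j : EuclideanSpace ℝ (Fin 3) →L[ℝ] ℝ).hasFDerivAt
      (x := y)).const_sub (x j)
    refine (h.pow 2).congr_fderiv ?_
    ext v
    simp
  have h := ((((hp 2).mul_const u⁻¹).add
    (((hp 0).add (hp 1)).const_mul (Real.cosh u / Real.sinh u))).const_mul (-(b / 4))).exp.mul_const
      (Real.sqrt u * Real.sinh u)⁻¹
  refine h.congr_fderiv ?_
  ext v
  simp [fderivKer, Fin.sum_univ_three, partialKer, wt, kerInt, perpSq]
  ring_nf

lemma norm_proj_le_one (j : Fin 3) :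
    ‖(EuclideanSpace.proj j : EuclideanSpace ℝ (Fin 3) →L[ℝ] ℝ)‖ ≤ 1 :=
  ContinuousLinearMap.opNorm_le_bound _ zero_le_one fun v => by
    simpa using PiLp.norm_apply_le v j

lemma abs_coord_le (x y : EuclideanSpace ℝ (Fin 3)) (j : Fin 3) : |x j - y j| ≤ dist x y := by
  simpa [dist_eq_norm] using PiLp.norm_apply_le (x - y) j

lemma abs_partialKer_le {b : ℝ} (hb : 0 < b) (x y : EuclideanSpace ℝ (Fin 3)) (j : Fin 3)
    (hxy : 0 < dist x y) {u : ℝ} (hu : 0 < u) (hu1 : u < 1) :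
    |partialKer b x y j u| ≤ b * dist x y * (384 / (b * dist x y ^ 2) ^ 3) := by
  have h0 : 0 ≤ wt j u * kerInt b x y u := mul_nonneg
    ((by positivity : (0 : ℝ) ≤ 1 / u).trans (wt_bounds j hu hu1).1) (kerInt_nonneg x y hu)
  unfold partialKer
  rw [abs_mul, abs_mul, abs_of_pos (half_pos hb), abs_of_nonneg h0]
  calc b / 2 * |x j - y j| * (wt j u * kerInt b x y u)
      ≤ b / 2 * dist x y * (2 * (384 / (b * dist x y ^ 2) ^ 3)) := by
        have h1 := abs_coord_le x y j
        have h2 := (wt_mul_kerInt_le hb x y j hu hu1).trans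
          (mul_le_mul_of_nonneg_left (model_le (by positivity) hu hu1) zero_le_two)
        exact mul_le_mul (by gcongr) h2 h0 (by positivity)
    _ = _ := by ring

/-! ### Integrability and differentiation under the integral sign -/

lemma measurable_kerInt (b : ℝ) (x y : EuclideanSpace ℝ (Fin 3)) :
    Measurable (kerInt b x y) := by
  unfold kerInt
  fun_prop

lemma measurable_partialKer (b : ℝ) (x y : EuclideanSpace ℝ (Fin 3)) (j : Fin 3) :
    Measurable (partialKer b x y j) := by
  have := measurable_kerInt b x y
  unfold partialKer wt
  split_ifs <;> fun_prop

lemma measurable_model (A : ℝ) : Measurable (model A) := by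
  unfold model
  fun_prop

lemma integrableOn_of_abs_le {f : ℝ → ℝ} (hf : Measurable f) {M : ℝ}
    (h : ∀ u, 0 < u → u < 1 → |f u| ≤ M) : IntegrableOn f (Ioo 0 1) :=
  Measure.integrableOn_of_bounded (by simp) hf.aestronglyMeasurable
    ((ae_restrict_iff' measurableSet_Ioo).2 (ae_of_all _ fun u hu => h u hu.1 hu.2))

lemma integrableOn_partialKer {b : ℝ} (hb : 0 < b) (x y : EuclideanSpace ℝ (Fin 3)) (j : Fin 3)
    (hxy : 0 < dist x y) : IntegrableOn (partialKer b x y j) (Ioo 0 1) :=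
  integrableOn_of_abs_le (measurable_partialKer b x y j)
    fun _ hu hu1 => abs_partialKer_le hb x y j hxy hu hu1

lemma integrableOn_model {A : ℝ} (hA : 0 < A) : IntegrableOn (model A) (Ioo 0 1) :=
  integrableOn_of_abs_le (measurable_model A)
    fun _ hu hu1 => by rw [abs_of_nonneg model_nonneg]; exact model_le hA hu hu1

/-- The bound depends on `y` only through `|x - y|`, so it is uniform away from the diagonal. -/
lemma norm_fderivKer_le {b : ℝ} (hb : 0 < b) (x y : EuclideanSpace ℝ (Fin 3))
    (hxy : 0 < dist x y) {u : ℝ} (hu : 0 < u) (hu1 : u < 1) :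
    ‖fderivKer b x y u‖ ≤ ∑ _j : Fin 3, b * dist x y * (384 / (b * dist x y ^ 2) ^ 3) := by
  unfold fderivKer
  refine (norm_sum_le _ _).trans (Finset.sum_le_sum fun j _ => ?_)
  rw [norm_smul, Real.norm_eq_abs]
  calc |partialKer b x y j u| * ‖(EuclideanSpace.proj j : EuclideanSpace ℝ (Fin 3) →L[ℝ] ℝ)‖
      ≤ |partialKer b x y j u| * 1 := by gcongr; exact norm_proj_le_one j
    _ ≤ _ := by rw [mul_one]; exact abs_partialKer_le hb x y j hxy hu hu1

lemma aestronglyMeasurable_fderivKer (b : ℝ) (x y : EuclideanSpace ℝ (Fin 3)) (μ : Measure ℝ) :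
    AEStronglyMeasurable (fderivKer b x y) μ := by
  unfold fderivKer
  exact Finset.aestronglyMeasurable_fun_sum _ fun j _ =>
    (measurable_partialKer b x y j).aestronglyMeasurable.smul_const _

lemma integrableOn_fderivKer {b : ℝ} (hb : 0 < b) (x y : EuclideanSpace ℝ (Fin 3))
    (hxy : 0 < dist x y) : IntegrableOn (fderivKer b x y) (Ioo 0 1) :=
  Measure.integrableOn_of_bounded (by simp) (aestronglyMeasurable_fderivKer b x y _)
    ((ae_restrict_iff' measurableSet_Ioo).2
      (ae_of_all _ fun _ hu => norm_fderivKer_le hb x y hxy hu.1 hu.2))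

/-- Differentiation under the integral sign. On the ball of radius `|x - y| / 2` around `y` the
distance to `x` stays bounded below, so the derivatives of the integrand are uniformly bounded
in `u ∈ (0, 1)`. -/
lemma hasFDerivAt_integral_kerInt {b : ℝ} (hb : 0 < b) (x y : EuclideanSpace ℝ (Fin 3))
    (hxy : 0 < dist x y) :
    HasFDerivAt (fun y' => ∫ u in Ioo (0 : ℝ) 1, kerInt b x y' u)
      (∫ u in Ioo (0 : ℝ) 1, fderivKer b x y u) y := by
  set r := dist x y with hr
  have hball : ∀ y' ∈ Metric.ball y (r / 2), r / 2 ≤ dist x y' ∧ dist x y' ≤ 2 * r := by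
    intro y' hy'
    rw [Metric.mem_ball] at hy'
    have h1 := dist_triangle x y' y
    have h2 := dist_triangle x y y'
    rw [dist_comm y y'] at h2
    constructor <;> linarith
  refine hasFDerivAt_integral_of_dominated_of_fderiv_le
    (bound := fun _ => ∑ _j : Fin 3, b * (2 * r) * (384 / (b * (r / 2) ^ 2) ^ 3))
    (Metric.ball_mem_nhds y (half_pos hxy))
    (Filter.Eventually.of_forall fun y' => (measurable_kerInt b x y').aestronglyMeasurable)
    ?_ ?_ ?_ ?_ ?_
  · refine integrableOn_of_abs_le (measurable_kerInt b x y) (M := 384 / (b * r ^ 2) ^ 3) ?_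
    intro u hu hu1
    rw [abs_of_nonneg (kerInt_nonneg x y hu)]
    have h1 := kerInt_le hb x y hu hu1
    have h2 := model_le (A := b * r ^ 2) (by positivity) hu hu1
    have h3 := model_nonneg (A := b * r ^ 2) (u := u)
    rw [← hr] at h1
    nlinarith
  · exact aestronglyMeasurable_fderivKer b x y _
  · refine (ae_restrict_iff' measurableSet_Ioo).2 (ae_of_all _ fun u hu y' hy' => ?_)
    obtain ⟨h1, h2⟩ := hball y' hy'
    have h3 : 0 < dist x y' := by linarith
    refine (norm_fderivKer_le hb x y' h3 hu.1 hu.2).trans ?_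
    gcongr
  · exact integrable_const _
  · exact ae_of_all _ fun u y' _ => hasFDerivAt_kerInt b x y' u

lemma fderiv_I0 {b : ℝ} (hb : 0 < b) (x y : EuclideanSpace ℝ (Fin 3)) (hxy : 0 < dist x y)
    (j : Fin 3) :
    fderiv ℝ (fun y' => I0 b x y') y (EuclideanSpace.single j 1) =
      Real.sqrt b / (4 * Real.pi) ^ ((3 : ℝ) / 2) * ∫ u in Ioo (0 : ℝ) 1, partialKer b x y j u := by
  have h := (hasFDerivAt_integral_kerInt hb x y hxy).const_mul
    (Real.sqrt b / (4 * Real.pi) ^ ((3 : ℝ) / 2))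
  have h' : fderiv ℝ (fun y' => I0 b x y') y = _ := h.fderiv
  rw [h', smul_apply,
    ContinuousLinearMap.integral_apply (integrableOn_fderivKer hb x y hxy), smul_eq_mul]
  congr 2
  funext u
  fin_cases j <;> simp [fderivKer, Fin.sum_univ_three]

/-! ### The Gaussian model integral and the conclusion -/

/-- The substitution `v = A / u`, mapping `(0, 1)` onto `(A, ∞)`. -/
lemma integral_tail_eq {A : ℝ} (hA : 0 < A) :
    ∫ v in Ici A, Real.sqrt v * Real.exp (-v / 4)
      = A * Real.sqrt A * ∫ u in Ioo (0 : ℝ) 1, model A u := by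
  have himg : (fun u : ℝ => A / u) '' Ioo 0 1 = Ioi A := by
    ext v
    simp only [mem_image, mem_Ioo, mem_Ioi]
    constructor
    · rintro ⟨u, ⟨h0, h1⟩, rfl⟩
      rw [lt_div_iff₀ h0]; nlinarith
    · intro hv
      have hv0 := hA.trans hv
      exact ⟨A / v, ⟨by positivity, (div_lt_one hv0).2 hv⟩, by field_simp⟩
  have hinj : InjOn (fun u : ℝ => A / u) (Ioo 0 1) := by
    intro u hu v hv h
    have h1 := hu.1.ne'
    have h2 := hv.1.ne'
    simp only at h
    field_simp at h
    exact h.symm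
  rw [integral_Ici_eq_integral_Ioi, ← himg,
    integral_image_eq_integral_abs_deriv_smul (f' := fun u => -A / u ^ 2) measurableSet_Ioo ?_ hinj,
    ← integral_const_mul]
  · refine setIntegral_congr_fun measurableSet_Ioo fun u hu => ?_
    have hu0 := hu.1
    have hs : 0 < Real.sqrt u := Real.sqrt_pos.2 hu0
    simp only [smul_eq_mul, model]
    rw [abs_div, abs_neg, abs_of_pos hA, abs_of_pos (by positivity : 0 < u ^ 2),
      Real.sqrt_div hA.le, show -(A / u) / 4 = -(A / (4 * u)) by field_simp]
    field_simp
  · intro u hu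
    have h := (hasDerivAt_const u A).div (hasDerivAt_id u) hu.1.ne'
    refine (h.congr_deriv ?_).hasDerivWithinAt
    simp

lemma integrableOn_inv_sqrt : IntegrableOn (fun u : ℝ => 2 / Real.sqrt u) (Ioo 0 1) := by
  have h : IntegrableOn (fun u : ℝ => u ^ (-(1 / 2) : ℝ)) (Ioo 0 1) :=
    (intervalIntegral.integrableOn_Ioo_rpow_iff zero_lt_one).2 (by norm_num)
  refine IntegrableOn.congr_fun (h.const_mul 2) (fun u hu => ?_) measurableSet_Ioo
  simp only [Real.sqrt_eq_rpow]
  rw [Real.rpow_neg hu.1.le]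
  rfl

/-- There are `C > 0` and `δ > 0` such that for all `x, y ∈ ℝ³` with
`0 < |x - y| < δ` and every coordinate `j`:
`|∂I₀/∂y_j(x,y) - ((x_j - y_j)/(2(4π)^{3/2}|x-y|³)) ∫_{b|x-y|²}^∞ u^{1/2} e^{-u/4} du| ≤ C`. -/
theorem stmt10 (b : ℝ) (hb : 0 < b) :
    ∃ C > (0 : ℝ), ∃ δ > (0 : ℝ), ∀ x y : EuclideanSpace ℝ (Fin 3),
      0 < dist x y → dist x y < δ → ∀ j : Fin 3,
      |fderiv ℝ (fun y' => I0 b x y') y (EuclideanSpace.single j 1) -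
          (x j - y j) / (2 * (4 * Real.pi) ^ ((3 : ℝ) / 2) * dist x y ^ 3) *
            ∫ u in Ici (b * dist x y ^ 2), Real.sqrt u * Real.exp (-u / 4)| ≤ C := by
  set P := (4 * Real.pi) ^ ((3 : ℝ) / 2) with hP
  have hP0 : 0 < P := by have := Real.pi_pos; positivity
  set J := ∫ u in Ioo (0 : ℝ) 1, 2 / Real.sqrt u with hJ
  have hJ0 : 0 ≤ J := integral_nonneg fun u => by positivity
  have hsb : 0 < Real.sqrt b := Real.sqrt_pos.2 hb
  -- The summand `1` only makes the constant visibly positive.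
  refine ⟨Real.sqrt b / P * (b / 2) * J + 1, by positivity, 1, one_pos, ?_⟩
  intro x y hxy hxy1 j
  have hA : 0 < b * dist x y ^ 2 := by positivity
  have hsA : Real.sqrt (b * dist x y ^ 2) = Real.sqrt b * dist x y := by
    rw [Real.sqrt_mul hb.le, Real.sqrt_sq hxy.le]
  have hdiff : |(∫ u in Ioo (0 : ℝ) 1, partialKer b x y j u)
      - b / 2 * (x j - y j) * ∫ u in Ioo (0 : ℝ) 1, model (b * dist x y ^ 2) u| ≤ b / 2 * J := by
    rw [← integral_const_mul, ← integral_sub (integrableOn_partialKer hb x y j hxy)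
      ((integrableOn_model hA).const_mul _), hJ, ← integral_const_mul, ← Real.norm_eq_abs]
    refine norm_integral_le_of_norm_le (integrableOn_inv_sqrt.const_mul _)
      ((ae_restrict_iff' measurableSet_Ioo).2 (ae_of_all _ fun u hu => ?_))
    unfold partialKer
    rw [← mul_sub, Real.norm_eq_abs, abs_mul, abs_mul, abs_of_pos (half_pos hb)]
    have h1 := wt_mul_kerInt_sub_model hb x y j hu.1 hu.2
    have h2 : |x j - y j| ≤ 1 := (abs_coord_le x y j).trans hxy1.le
    calc _ ≤ b / 2 * 1 * (2 / Real.sqrt u) := by gcongr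
      _ = _ := by ring
  rw [fderiv_I0 hb x y hxy, integral_tail_eq hA, hsA, ← hP]
  have e : ∀ X M : ℝ, Real.sqrt b / P * X - (x j - y j) / (2 * P * dist x y ^ 3) *
      (b * dist x y ^ 2 * (Real.sqrt b * dist x y) * M)
      = Real.sqrt b / P * (X - b / 2 * (x j - y j) * M) := by
    intro X M; field_simp
  rw [e, abs_mul, abs_of_pos (by positivity : 0 < Real.sqrt b / P)]
  have := mul_le_mul_of_nonneg_left hdiff (by positivity : 0 ≤ Real.sqrt b / P)
  linarith
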